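/- For five general points p_1,…,p_5 of multiplicity 6 and a general point p_0: ℓ(L(13, 2, 6^5)) = 2 (virtual dimension −4); ℓ(L(14, 3, 6^5)) = 9 (virtual dimension 8); ℓ(L(12, 0, 6^5)) = 0 (virtual dimension −15); ℓ(L(13, 1, 6^5)) = 4 (virtual dimension −2); ℓ(L(14, 2, 6^5)) = 12 (virtual dimension 11); ℓ(L(13, 0, 6^5)) = 5 (virtual dimension −1); ℓ(L(14, 1, 6^5)) = 14 (virtual dimension 13); and ℓ(L(14, 0, 6^5)) = 15 (virtual dimension 14); in particular all these systems are special. -/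

import Mathlib

open MvPolynomial

/-- The iterated partial derivative corresponding to the multi-index `ν`. -/
noncomputable def mderiv (ν : Fin 3 → ℕ) :
    MvPolynomial (Fin 3) ℂ →ₗ[ℂ] MvPolynomial (Fin 3) ℂ :=
  ((pderiv (R := ℂ) (0 : Fin 3)).toLinearMap ^ ν 0) ∘ₗ
  ((pderiv (R := ℂ) (1 : Fin 3)).toLinearMap ^ ν 1) ∘ₗ
  ((pderiv (R := ℂ) (2 : Fin 3)).toLinearMap ^ ν 2)

/-- The linear system `L(d; m)` of homogeneous forms of degree `d` in three variables
all of whose partial derivatives of order `< m i` vanish at the point `p i`,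
i.e. plane curves of degree `d` with multiplicity at least `m i` at `p i`. -/
noncomputable def linSys {k : ℕ} (p : Fin k → Fin 3 → ℂ) (d : ℕ) (m : Fin k → ℕ) :
    Submodule ℂ (MvPolynomial (Fin 3) ℂ) :=
  (homogeneousSubmodule (Fin 3) ℂ d) ⊓
    ⨅ (i : Fin k), ⨅ (ν : Fin 3 → ℕ), ⨅ (_ : ν 0 + ν 1 + ν 2 < m i),
      LinearMap.ker ((aeval (p i)).toLinearMap ∘ₗ mderiv ν)

/-- The projective dimension `ℓ` of the linear system (`-1` means empty). -/
noncomputable def projDim {k : ℕ} (p : Fin k → Fin 3 → ℂ) (d : ℕ) (m : Fin k → ℕ) : ℤ :=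
  (Module.finrank ℂ (linSys p d m) : ℤ) - 1

/-- The virtual dimension `v = d(d+3)/2 - ∑ mᵢ(mᵢ+1)/2`. -/
def virtDim {k : ℕ} (d : ℕ) (m : Fin k → ℕ) : ℤ :=
  ((d : ℤ) * (d + 3)) / 2 - ∑ i : Fin k, ((m i : ℤ) * (m i + 1)) / 2

/-- The quasi-homogeneous multiplicity vector `(m₀, 6, …, 6)` on `n + 1` points. -/
def qh (n m0 : ℕ) : Fin (n + 1) → ℕ := fun i => if i = 0 then m0 else 6

/-- A property `Q` of configurations of `k` points of `ℙ²` (given by nonzero homogeneous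
coordinate vectors) holds for points in general position: there is a nonzero polynomial
in the coordinates such that `Q` holds whenever it does not vanish. -/
def Generically (k : ℕ) (Q : (Fin k → Fin 3 → ℂ) → Prop) : Prop :=
  ∃ P : MvPolynomial (Fin k × Fin 3) ℂ, P ≠ 0 ∧
    ∀ p : Fin k → Fin 3 → ℂ, (∀ i, p i ≠ 0) →
      eval (fun x => p x.1 x.2) P ≠ 0 → Q p

namespace MvPolynomial

/-- The substitution `x ↦ x + p` on polynomials. -/
noncomputable def transl (p : Fin 3 → ℂ) :
    MvPolynomial (Fin 3) ℂ →ₐ[ℂ] MvPolynomial (Fin 3) ℂ :=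
  aeval fun i => X i + C (p i)

lemma transl_X (p : Fin 3 → ℂ) (i : Fin 3) : transl p (X i) = X i + C (p i) := by
  simp [transl]

lemma pderiv_transl (p : Fin 3 → ℂ) (i : Fin 3) (F : MvPolynomial (Fin 3) ℂ) :
    pderiv i (transl p F) = transl p (pderiv i F) := by
  induction F using MvPolynomial.induction_on with
  | C a => simp [transl]
  | add F G hF hG => simp [hF, hG]
  | mul_X F j hF =>
    rw [map_mul, pderiv_mul, pderiv_mul, map_add, map_mul, map_mul, hF, transl_X]
    rcases eq_or_ne j i with rfl | h
    · simp
    · simp [pderiv_X_of_ne h]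

lemma constantCoeff_transl (p : Fin 3 → ℂ) (F : MvPolynomial (Fin 3) ℂ) :
    constantCoeff (transl p F) = aeval p F := by
  induction F using MvPolynomial.induction_on with
  | C a => simp [transl]
  | add F G hF hG => simp [hF, hG]
  | mul_X F j hF => simp [hF, transl_X]

lemma transl_injective (p : Fin 3 → ℂ) : Function.Injective (transl p) := by
  have h : (transl (-p)).comp (transl p) = AlgHom.id ℂ _ := by
    ext i : 1
    simp [transl]
  exact Function.LeftInverse.injective (g := transl (-p)) fun F => DFunLike.congr_fun h F

lemma pderiv_pow_transl (p : Fin 3 → ℂ) (i : Fin 3) (n : ℕ) (F : MvPolynomial (Fin 3) ℂ) :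
    ((pderiv (R := ℂ) i).toLinearMap ^ n) (transl p F) =
      transl p (((pderiv (R := ℂ) i).toLinearMap ^ n) F) := by
  induction n generalizing F with
  | zero => simp
  | succ n ih => simp [pow_succ, Module.End.mul_apply, pderiv_transl, ih]

lemma mderiv_transl (p : Fin 3 → ℂ) (ν : Fin 3 → ℕ) (F : MvPolynomial (Fin 3) ℂ) :
    mderiv ν (transl p F) = transl p (mderiv ν F) := by
  simp [mderiv, pderiv_pow_transl]

lemma exists_coeff_pderiv_pow (i : Fin 3) (n : ℕ) (m : Fin 3 →₀ ℕ) :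
    ∃ c : ℂ, c ≠ 0 ∧ ∀ F : MvPolynomial (Fin 3) ℂ,
      coeff m (((pderiv (R := ℂ) i).toLinearMap ^ n) F) =
        coeff (m + Finsupp.single i n) F * c := by
  induction n with
  | zero => exact ⟨1, one_ne_zero, by simp⟩
  | succ n ih =>
    obtain ⟨c, hc, h⟩ := ih
    refine ⟨((m + Finsupp.single i n) i + 1) * c, mul_ne_zero ?_ hc, fun F => ?_⟩
    · exact_mod_cast ((m + Finsupp.single i n) i).succ_ne_zero
    · rw [pow_succ, Module.End.mul_apply, h]
      simp [coeff_pderiv, add_assoc, mul_assoc, Finsupp.single_add]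

lemma aeval_mderiv_eq_zero_iff (p : Fin 3 → ℂ) (ν : Fin 3 → ℕ) (F : MvPolynomial (Fin 3) ℂ) :
    aeval p (mderiv ν F) = 0 ↔ coeff (Finsupp.equivFunOnFinite.symm ν) (transl p F) = 0 := by
  rw [← constantCoeff_transl, ← mderiv_transl, constantCoeff_eq]
  obtain ⟨a, ha, h0⟩ := exists_coeff_pderiv_pow 0 (ν 0) 0
  obtain ⟨b, hb, h1⟩ := exists_coeff_pderiv_pow 1 (ν 1) (Finsupp.single 0 (ν 0))
  obtain ⟨c, hc, h2⟩ := exists_coeff_pderiv_pow 2 (ν 2)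
    (Finsupp.single 0 (ν 0) + Finsupp.single 1 (ν 1))
  have : (Finsupp.single 0 (ν 0) + Finsupp.single 1 (ν 1) + Finsupp.single 2 (ν 2) :
      Fin 3 →₀ ℕ) = Finsupp.equivFunOnFinite.symm ν := by
    ext i
    fin_cases i <;> simp
  simp [mderiv, h0, h1, h2, ha, hb, hc, ← this]

/-- The multiplicity at `p` of the zero locus of `F`. -/
noncomputable def mult (p : Fin 3 → ℂ) (F : MvPolynomial (Fin 3) ℂ) : ℕ∞ :=
  (transl p F : MvPowerSeries (Fin 3) ℂ).order

lemma natCast_le_mult_iff {p : Fin 3 → ℂ} {n : ℕ} {F : MvPolynomial (Fin 3) ℂ} :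
    n ≤ mult p F ↔ ∀ ν : Fin 3 →₀ ℕ, ν.degree < n → coeff ν (transl p F) = 0 := by
  refine ⟨fun h ν hν => ?_, fun h => MvPowerSeries.nat_le_order fun ν hν => ?_⟩
  · rw [← coeff_coe]
    exact MvPowerSeries.coeff_of_lt_order (lt_of_lt_of_le (by exact_mod_cast hν) h)
  · rw [coeff_coe]
    exact h ν hν

lemma mult_mul (p : Fin 3 → ℂ) (F G : MvPolynomial (Fin 3) ℂ) :
    mult p (F * G) = mult p F + mult p G := by
  simp [mult, MvPowerSeries.order_mul]

lemma mult_eq_zero {p : Fin 3 → ℂ} {F : MvPolynomial (Fin 3) ℂ} (h : aeval p F ≠ 0) :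
    mult p F = 0 := by
  by_contra h0
  have h1 : ((1 : ℕ) : ℕ∞) ≤ mult p F := by
    rw [Nat.cast_one]
    exact Order.one_le_iff_ne_zero.mpr h0
  exact h (by simpa [← constantCoeff_transl, constantCoeff_eq] using
    natCast_le_mult_iff.mp h1 0 (by simp))

lemma mult_pow (p : Fin 3 → ℂ) (F : MvPolynomial (Fin 3) ℂ) (n : ℕ) :
    mult p (F ^ n) = n • mult p F := by
  induction n with
  | zero => simp [mult_eq_zero]
  | succ n ih => rw [pow_succ, mult_mul, ih, succ_nsmul]

lemma eq_zero_of_totalDegree_lt_mult {p : Fin 3 → ℂ} {F : MvPolynomial (Fin 3) ℂ} {d : ℕ}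
    (hF : F.IsHomogeneous d) (h : d < mult p F) : F = 0 := by
  have h1 : ((d + 1 : ℕ) : ℕ∞) ≤ mult p F := by
    exact_mod_cast Order.add_one_le_of_lt h
  rw [natCast_le_mult_iff] at h1
  refine transl_injective p ?_
  rw [map_zero]
  have hdeg : (transl p F).totalDegree ≤ d := by
    rw [transl, aeval_def, eval₂_eq]
    refine totalDegree_finsetSum_le fun ν hν => (totalDegree_mul _ _).trans ?_
    simp only [algebraMap_eq, totalDegree_C, zero_add]
    refine (totalDegree_finsetProd _ _).trans ?_
    rw [hF.degree_eq_sum_deg_support hν]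
    refine Finset.sum_le_sum fun i _ => (totalDegree_pow _ _).trans ?_
    have : (X i + C (p i)).totalDegree ≤ 1 :=
      (totalDegree_add _ _).trans (by simp)
    nlinarith
  ext ν
  by_cases hν : ν.degree < d + 1
  · simpa using h1 ν hν
  · rw [coeff_zero]
    refine coeff_eq_zero_of_totalDegree_lt ?_
    rw [← Finsupp.degree_apply]
    omega

end MvPolynomial

lemma mem_linSys_iff {k : ℕ} {p : Fin k → Fin 3 → ℂ} {d : ℕ} {m : Fin k → ℕ}
    {F : MvPolynomial (Fin 3) ℂ} :
    F ∈ linSys p d m ↔ F.IsHomogeneous d ∧ ∀ i, m i ≤ mult (p i) F := by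
  simp only [linSys, Submodule.mem_inf, mem_homogeneousSubmodule, Submodule.mem_iInf,
    LinearMap.mem_ker, LinearMap.comp_apply, AlgHom.toLinearMap_apply, aeval_mderiv_eq_zero_iff,
    natCast_le_mult_iff]
  refine and_congr_right fun _ => forall_congr' fun i => ?_
  refine ⟨fun h ν hν => ?_, fun h ν hν => h _ ?_⟩
  · simpa using h ν (by simpa [Finsupp.degree_eq_sum, Fin.sum_univ_three] using hν)
  · simpa [Finsupp.degree_eq_sum, Fin.sum_univ_three] using hν

instance (d : ℕ) : Module.Finite ℂ (homogeneousSubmodule (Fin 3) ℂ d) :=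
  Module.Finite.iff_fg.mpr (homogeneousSubmodule_fg _ _ d)

instance {k : ℕ} (p : Fin k → Fin 3 → ℂ) (d : ℕ) (m : Fin k → ℕ) :
    Module.Finite ℂ (linSys p d m) :=
  Submodule.finiteDimensional_of_le (S₂ := homogeneousSubmodule (Fin 3) ℂ d) inf_le_left

namespace MvPolynomial

lemma one_le_mult_iff {p : Fin 3 → ℂ} {F : MvPolynomial (Fin 3) ℂ} :
    1 ≤ mult p F ↔ aeval p F = 0 := by
  rw [← Nat.cast_one, natCast_le_mult_iff, ← constantCoeff_transl, constantCoeff_eq]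
  refine ⟨fun h => h 0 (by simp), fun h ν hν => ?_⟩
  rwa [(Finsupp.degree_eq_zero_iff ν).mp (by omega)]

/-- The equation `y² = xz` of a smooth conic. -/
noncomputable def conic : MvPolynomial (Fin 3) ℂ := X 1 ^ 2 - X 0 * X 2

/-- The parametrization `t ↦ (1 : t : t²)` of the conic `y² = xz`. -/
def conicPt (t : ℂ) : Fin 3 → ℂ := ![1, t, t ^ 2]

/-- Pull-back of polynomials along the parametrization of the conic `y² = xz`. -/
noncomputable def conicPullback : MvPolynomial (Fin 3) ℂ →ₐ[ℂ] Polynomial ℂ :=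
  aeval ![1, Polynomial.X, Polynomial.X ^ 2]

lemma isHomogeneous_conic : conic.IsHomogeneous 2 :=
  ((isHomogeneous_X ℂ 1).pow 2).sub ((isHomogeneous_X ℂ 0).mul (isHomogeneous_X ℂ 2))

lemma mult_conic (t : ℂ) : mult (conicPt t) conic = 1 := by
  refine le_antisymm ?_ (one_le_mult_iff.mpr (by simp [conic, conicPt]))
  have h : coeff (Finsupp.single 2 1) (transl (conicPt t) conic) ≠ 0 := by
    have : transl (conicPt t) conic = X 1 ^ 2 + C (2 * t) * X 1 - X 2 * X 0
        - C (t ^ 2) * X 0 - X 2 := by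
      have h2 : (C 2 : MvPolynomial (Fin 3) ℂ) = 2 := rfl
      simp [conic, conicPt, transl_X, h2]
      ring
    have h1 : (Finsupp.single 1 2 : Fin 3 →₀ ℕ) ≠ Finsupp.single 2 1 := by
      intro h; simpa using DFunLike.congr_fun h 1
    rw [this]
    simp [coeff_X_pow, coeff_X, coeff_mul_X', h1]
  refine (MvPowerSeries.order_le (d := Finsupp.single 2 1) ?_).trans ?_
  · rwa [coeff_coe]
  · simp

lemma conicPullback_eq (t : ℂ) (F : MvPolynomial (Fin 3) ℂ) :
    conicPullback F = aeval ![0, Polynomial.X - Polynomial.C t,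
      Polynomial.X ^ 2 - Polynomial.C (t ^ 2)] (transl (conicPt t) F) := by
  induction F using MvPolynomial.induction_on with
  | C a => simp [conicPullback, transl]
  | add F G hF hG => simp [hF, hG]
  | mul_X F j hF =>
    rw [map_mul, map_mul, map_mul, hF, transl_X]
    fin_cases j <;> simp [conicPullback, conicPt]

lemma pow_dvd_conicPullback {t : ℂ} {F : MvPolynomial (Fin 3) ℂ} {n : ℕ}
    (h : n ≤ mult (conicPt t) F) :
    (Polynomial.X - Polynomial.C t) ^ n ∣ conicPullback F := by
  rw [natCast_le_mult_iff] at h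
  rw [conicPullback_eq t, aeval_def, eval₂_eq]
  refine Finset.dvd_sum fun ν hν => Dvd.dvd.mul_left ?_ _
  have hn : n ≤ ν.degree := by
    by_contra hlt
    exact mem_support_iff.mp hν (h ν (by omega))
  refine (pow_dvd_pow _ hn).trans ?_
  rw [Finsupp.degree_apply, ← Finset.prod_pow_eq_pow_sum]
  refine Finset.prod_dvd_prod_of_dvd _ _ fun i _ => pow_dvd_pow_of_dvd ?_ _
  fin_cases i
  · simp
  · simp
  · exact ⟨Polynomial.X + Polynomial.C t, by simp; ring⟩

lemma natDegree_conicPullback_le {F : MvPolynomial (Fin 3) ℂ} {d : ℕ} (hF : F.IsHomogeneous d) :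
    (conicPullback F).natDegree ≤ 2 * d := by
  rw [conicPullback, aeval_def, eval₂_eq]
  refine Polynomial.natDegree_sum_le_of_forall_le _ _ fun ν hν => ?_
  refine (Polynomial.natDegree_C_mul_le _ _).trans ((Polynomial.natDegree_prod_le _ _).trans ?_)
  rw [hF.degree_eq_sum_deg_support hν, Finset.mul_sum]
  refine Finset.sum_le_sum fun i _ => Polynomial.natDegree_pow_le.trans ?_
  rw [mul_comm]
  refine Nat.mul_le_mul_right _ ?_
  fin_cases i <;> simp

/-- The linear section of `conicPullback` in degree `d + 2` sending `t ^ k` to a monomial of degree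
at most one in `y`. -/
noncomputable def conicSection (d : ℕ) : Polynomial ℂ →ₗ[ℂ] MvPolynomial (Fin 3) ℂ :=
  (Polynomial.basisMonomials ℂ).constr ℂ fun k =>
    X 0 ^ (d + 2 - k % 2 - k / 2) * X 1 ^ (k % 2) * X 2 ^ (k / 2)

lemma conicSection_X_pow (d k : ℕ) : conicSection d (Polynomial.X ^ k) =
    X 0 ^ (d + 2 - k % 2 - k / 2) * X 1 ^ (k % 2) * X 2 ^ (k / 2) := by
  have h : Polynomial.X ^ k = Polynomial.basisMonomials ℂ k := by
    simp [Polynomial.coe_basisMonomials, Polynomial.monomial_one_right_eq_X_pow]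
  rw [h, conicSection, Module.Basis.constr_basis]

lemma sub_conicSection_mem_of_monomial (d b : ℕ) :
    ∀ a c : ℕ, a + b + c = d + 2 → ∃ G : MvPolynomial (Fin 3) ℂ, G.IsHomogeneous d ∧
      X 0 ^ a * X 1 ^ b * X 2 ^ c - conicSection d (Polynomial.X ^ (b + 2 * c)) = conic * G := by
  induction b using Nat.strong_induction_on with
  | _ b ih =>
    intro a c h
    rcases lt_or_ge b 2 with hb | hb
    · refine ⟨0, isHomogeneous_zero _ _ _, ?_⟩
      rw [conicSection_X_pow, show (b + 2 * c) % 2 = b by omega, show (b + 2 * c) / 2 = c by omega,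
        show d + 2 - b - c = a by omega]
      simp
    · obtain ⟨b, rfl⟩ := Nat.exists_eq_add_of_le' hb
      obtain ⟨G, hG, hG'⟩ := ih b (by omega) (a + 1) (c + 1) (by omega)
      refine ⟨X 0 ^ a * X 1 ^ b * X 2 ^ c + G, ?_, ?_⟩
      · refine IsHomogeneous.add ?_ hG
        rw [show d = a + b + c by omega]
        exact ((isHomogeneous_X_pow 0 a).mul (isHomogeneous_X_pow 1 b)).mul
          (isHomogeneous_X_pow 2 c)
      · rw [mul_add, ← hG', show b + 2 * (c + 1) = b + 2 + 2 * c by ring, conic]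
        ring

lemma sub_conicSection_mem {F : MvPolynomial (Fin 3) ℂ} {d : ℕ} (hF : F.IsHomogeneous (d + 2)) :
    F - conicSection d (conicPullback F) ∈
      (homogeneousSubmodule (Fin 3) ℂ d).map (LinearMap.mulLeft ℂ conic) := by
  rw [F.as_sum]
  rw [map_sum, map_sum, ← Finset.sum_sub_distrib]
  refine Submodule.sum_mem _ fun ν hν => ?_
  have hν' := hF.degree_eq_sum_deg_support hν
  obtain ⟨G, hG, h⟩ := sub_conicSection_mem_of_monomial d (ν 1) (ν 0) (ν 2) (by
    rw [hν', ← Finsupp.degree_apply, Finsupp.degree_eq_sum, Fin.sum_univ_three])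
  refine ⟨coeff ν F • G, Submodule.smul_mem _ _ hG, ?_⟩
  have hmon : monomial ν (coeff ν F) = coeff ν F • (X 0 ^ ν 0 * X 1 ^ ν 1 * X 2 ^ ν 2) := by
    rw [monomial_eq, Finsupp.prod_fintype _ _ (by simp), Fin.prod_univ_three, smul_eq_C_mul]
  rw [hmon, map_smul, map_smul, map_smul, ← smul_sub, LinearMap.mulLeft_apply, ← h]
  congr 4
  simp [conicPullback, pow_add, pow_mul]

lemma exists_eq_conic_mul {F : MvPolynomial (Fin 3) ℂ} {d : ℕ} (hF : F.IsHomogeneous (d + 2))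
    (h : conicPullback F = 0) : ∃ G, G.IsHomogeneous d ∧ F = conic * G := by
  obtain ⟨G, hG, h'⟩ := sub_conicSection_mem hF
  refine ⟨G, hG, ?_⟩
  simpa [h] using h'.symm

end MvPolynomial

lemma Submodule.finrank_map_add_finrank_inf_ker {K V W : Type*} [Field K] [AddCommGroup V]
    [Module K V] [AddCommGroup W] [Module K W] (L : Submodule K V) [Module.Finite K L]
    (f : V →ₗ[K] W) :
    Module.finrank K (L.map f) + Module.finrank K ↥(L ⊓ LinearMap.ker f) =
      Module.finrank K L := by
  rw [← (f.domRestrict L).finrank_range_add_finrank_ker, LinearMap.range_domRestrict,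
    LinearMap.ker_domRestrict, ← Submodule.map_comap_subtype]
  congr 1
  exact Submodule.finrank_map_subtype_eq L _

lemma finrank_linSys_conicPt_le {n : ℕ} {t : Fin n → ℂ} (ht : Function.Injective t) (d m : ℕ) :
    Module.finrank ℂ (linSys (fun i => conicPt (t i)) (d + 2) (fun _ => m + 1)) ≤
      (2 * (d + 2) + 1 - n * (m + 1)) +
        Module.finrank ℂ (linSys (fun i => conicPt (t i)) d (fun _ => m)) := by
  rw [← Submodule.finrank_map_add_finrank_inf_ker _ conicPullback.toLinearMap]
  refine add_le_add ?_ ?_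
  · set Q : Polynomial ℂ := ∏ i, (Polynomial.X - Polynomial.C (t i)) ^ (m + 1) with hQ
    have hQdeg : Q.natDegree = n * (m + 1) := by
      rw [hQ, Polynomial.natDegree_prod_of_monic _ _ fun i _ =>
        (Polynomial.monic_X_sub_C _).pow _]
      simp
    have hQ0 : Q ≠ 0 := (Polynomial.monic_prod_of_monic _ _ fun i _ =>
        (Polynomial.monic_X_sub_C _).pow _).ne_zero
    calc _ ≤ Module.finrank ℂ ((Polynomial.degreeLT ℂ (2 * (d + 2) + 1 - n * (m + 1))).map
          (LinearMap.mulLeft ℂ Q)) := by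
          refine Submodule.finrank_mono ?_
          rintro _ ⟨F, hF, rfl⟩
          obtain ⟨hFd, hFm⟩ := mem_linSys_iff.mp hF
          have hdvd : Q ∣ conicPullback F := by
            refine Finset.prod_dvd_of_coprime (fun i _ j _ hij => ?_) fun i _ =>
              pow_dvd_conicPullback (hFm i)
            exact IsCoprime.pow (Polynomial.isCoprime_X_sub_C_of_isUnit_sub
              (sub_ne_zero.mpr (ht.ne hij)).isUnit)
          obtain ⟨R, hR⟩ := hdvd
          refine ⟨R, ?_, hR.symm⟩
          rw [SetLike.mem_coe, Polynomial.mem_degreeLT]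
          rcases eq_or_ne R 0 with rfl | hR0
          · simp
          rw [Polynomial.degree_eq_natDegree hR0]
          have := natDegree_conicPullback_le hFd
          rw [hR, Polynomial.natDegree_mul hQ0 hR0, hQdeg] at this
          exact_mod_cast (show R.natDegree < _ by omega)
      _ ≤ Module.finrank ℂ (Polynomial.degreeLT ℂ (2 * (d + 2) + 1 - n * (m + 1))) :=
          Submodule.finrank_map_le _ _
      _ = _ := by
          rw [(Polynomial.degreeLTEquiv ℂ _).finrank_eq]
          simp
  · refine le_trans (Submodule.finrank_mono ?_) (Submodule.finrank_map_le
      (LinearMap.mulLeft ℂ conic) _)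
    rintro F ⟨hF, hF0⟩
    obtain ⟨hFd, hFm⟩ := mem_linSys_iff.mp hF
    obtain ⟨G, hG, rfl⟩ := exists_eq_conic_mul hFd (by simpa using hF0)
    refine ⟨G, mem_linSys_iff.mpr ⟨hG, fun i => ?_⟩, rfl⟩
    have := hFm i
    rw [mult_mul, mult_conic, Nat.cast_add, Nat.cast_one, add_comm] at this
    exact (ENat.add_le_add_iff_left ENat.one_ne_top).mp this

namespace MvPolynomial

lemma finrank_homogeneousSubmodule (d : ℕ) :
    Module.finrank ℂ (homogeneousSubmodule (Fin 3) ℂ d) = (d + 2).choose 2 := by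
  have hset : {ν : Fin 3 →₀ ℕ | ν.degree = d} =
      (Finset.finsuppAntidiag (Finset.univ : Finset (Fin 3)) d : Set (Fin 3 →₀ ℕ)) := by
    ext ν
    simp [Finset.mem_finsuppAntidiag, Finsupp.degree_eq_sum]
  rw [homogeneousSubmodule_eq_finsupp_supported, hset,
    (AddMonoidAlgebra.supportedEquivFinsupp _).finrank_eq, Module.finrank_finsupp_self]
  simpa [Finset.card_finsuppAntidiag_nat_eq_choose, add_comm] using Nat.choose_symm_add

lemma coeff_X_mul_pderiv (i : Fin 3) (F : MvPolynomial (Fin 3) ℂ) (ν : Fin 3 →₀ ℕ) :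
    coeff ν (X i * pderiv i F) = ν i * coeff ν F := by
  rw [coeff_X_mul']
  split_ifs with h
  · have h1 : 1 ≤ ν i := Nat.one_le_iff_ne_zero.mpr (by simpa using h)
    have h2 : ν - Finsupp.single i 1 + Finsupp.single i 1 = ν :=
      tsub_add_cancel_of_le (by simpa using h1)
    rw [coeff_pderiv, h2, mul_comm]
    simp [Nat.cast_sub h1]
  · simp [show ν i = 0 by simpa using h]

/-- Euler's identity around the point `p`, read off coefficientwise. -/
lemma sub_degree_mul_coeff_transl {p : Fin 3 → ℂ} {F : MvPolynomial (Fin 3) ℂ} {d : ℕ}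
    (hF : F.IsHomogeneous d) (ν : Fin 3 →₀ ℕ) :
    ((d : ℂ) - ν.degree) * coeff ν (transl p F) =
      ∑ i, p i * (coeff (ν + Finsupp.single i 1) (transl p F) * (ν i + 1)) := by
  have h := congrArg (fun G => coeff ν (transl p G)) hF.sum_X_mul_pderiv
  simp only [map_sum, map_mul, transl_X, ← pderiv_transl, add_mul, Finset.sum_add_distrib,
    coeff_add, coeff_sum, coeff_X_mul_pderiv, coeff_C_mul, coeff_pderiv, ← Finset.sum_mul,
    map_nsmul, coeff_smul] at h
  rw [sub_mul, sub_eq_iff_eq_add', Finsupp.degree_eq_sum, Nat.cast_sum, h]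
  simp

lemma natCast_succ_le_mult_iff {p : Fin 3 → ℂ} {F : MvPolynomial (Fin 3) ℂ} {d n : ℕ}
    (hF : F.IsHomogeneous d) (hn : n ≤ d) :
    (n + 1 : ℕ) ≤ mult p F ↔ homogeneousComponent n (transl p F) = 0 := by
  rw [natCast_le_mult_iff]
  constructor
  · intro h
    ext ν
    rw [coeff_homogeneousComponent, coeff_zero]
    split_ifs with hν
    · exact h ν (by omega)
    · rfl
  · intro h
    have key : ∀ e ≤ n, ∀ ν : Fin 3 →₀ ℕ, ν.degree = n - e → coeff ν (transl p F) = 0 := by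
      intro e
      induction e with
      | zero =>
        intro _ ν hν
        have := congrArg (coeff ν) h
        rwa [coeff_homogeneousComponent, if_pos (by omega), coeff_zero] at this
      | succ e ih =>
        intro he ν hν
        have h1 := sub_degree_mul_coeff_transl (p := p) hF ν
        rw [Finset.sum_eq_zero fun i _ => by
          rw [ih (by omega) _ (by rw [map_add, Finsupp.degree_single]; omega), zero_mul,
            mul_zero]] at h1
        refine (mul_eq_zero.mp h1).resolve_left (sub_ne_zero.mpr ?_)
        exact_mod_cast (show d ≠ ν.degree by omega)
    intro ν hν
    exact key (n - ν.degree) (by omega) ν (by omega)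

end MvPolynomial

lemma finrank_le_finrank_add_choose {L L' : Submodule ℂ (MvPolynomial (Fin 3) ℂ)} {d m : ℕ}
    (p : Fin 3 → ℂ) (hm : m ≤ d + 1) (hL : L ≤ homogeneousSubmodule (Fin 3) ℂ d)
    [Module.Finite ℂ L'] (hL' : ∀ F ∈ L, m ≤ mult p F → F ∈ L') :
    Module.finrank ℂ L ≤ Module.finrank ℂ L' + (m + 1).choose 2 := by
  have : Module.Finite ℂ L := Submodule.finiteDimensional_of_le hL
  cases m with
  | zero => simpa using Submodule.finrank_mono fun F hF => hL' F hF (by simp)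
  | succ m =>
    rw [← Submodule.finrank_map_add_finrank_inf_ker L
      (homogeneousComponent m ∘ₗ (transl p).toLinearMap), add_comm]
    refine add_le_add (Submodule.finrank_mono ?_) ?_
    · rintro F ⟨hF, hF0⟩
      exact hL' F hF ((natCast_succ_le_mult_iff (hL hF) (by omega)).mpr (by simpa using hF0))
    · rw [← finrank_homogeneousSubmodule]
      refine Submodule.finrank_mono ?_
      rintro _ ⟨F, _, rfl⟩
      exact homogeneousComponent_isHomogeneous _ _

lemma choose_le_finrank_linSys_add {k : ℕ} (p : Fin k → Fin 3 → ℂ) {d : ℕ} {m : Fin k → ℕ}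
    (hm : ∀ i, m i ≤ d + 1) :
    (d + 2).choose 2 ≤ Module.finrank ℂ (linSys p d m) + ∑ i, (m i + 1).choose 2 := by
  have key : ∀ s : Finset (Fin k), (d + 2).choose 2 ≤
      Module.finrank ℂ (linSys p d fun i => if i ∈ s then m i else 0) +
        ∑ i ∈ s, (m i + 1).choose 2 := by
    intro s
    induction s using Finset.induction_on with
    | empty =>
      rw [← finrank_homogeneousSubmodule, Finset.sum_empty, add_zero]
      exact Submodule.finrank_mono fun F hF => mem_linSys_iff.mpr ⟨hF, by simp⟩
    | insert j s hj ih =>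
      rw [Finset.sum_insert hj, ← add_assoc]
      refine ih.trans (Nat.add_le_add_right
        (finrank_le_finrank_add_choose (p j) (hm j) inf_le_left fun F hF hFj => ?_) _)
      obtain ⟨hFd, hFm⟩ := mem_linSys_iff.mp hF
      refine mem_linSys_iff.mpr ⟨hFd, fun i => ?_⟩
      rcases eq_or_ne i j with rfl | hij
      · simpa using hFj
      · simpa [Finset.mem_insert, hij] using hFm i
  have hm' : (fun i => if i ∈ Finset.univ then m i else 0) = m := by simp
  have h := key Finset.univ
  rwa [hm'] at h

lemma mul_mem_linSys {k : ℕ} {p : Fin k → Fin 3 → ℂ} {d e : ℕ} {m a : Fin k → ℕ}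
    {A F : MvPolynomial (Fin 3) ℂ} (hA : A ∈ linSys p e a) (hF : F ∈ linSys p d m) :
    A * F ∈ linSys p (e + d) (a + m) := by
  rw [mem_linSys_iff] at *
  refine ⟨hA.1.mul hF.1, fun i => ?_⟩
  rw [mult_mul, Pi.add_apply, Nat.cast_add]
  exact add_le_add (hA.2 i) (hF.2 i)

lemma pow_mem_linSys {k : ℕ} {p : Fin k → Fin 3 → ℂ} {d : ℕ} {m : Fin k → ℕ}
    {F : MvPolynomial (Fin 3) ℂ} (hF : F ∈ linSys p d m) (n : ℕ) :
    F ^ n ∈ linSys p (d * n) (n • m) := by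
  rw [mem_linSys_iff] at *
  refine ⟨hF.1.pow n, fun i => ?_⟩
  rw [mult_pow, Pi.smul_apply, smul_eq_mul, Nat.cast_mul, nsmul_eq_mul]
  exact mul_le_mul_right (hF.2 i) _

lemma finrank_map_mulLeft {A : MvPolynomial (Fin 3) ℂ} (hA : A ≠ 0)
    (L : Submodule ℂ (MvPolynomial (Fin 3) ℂ)) :
    Module.finrank ℂ (L.map (LinearMap.mulLeft ℂ A)) = Module.finrank ℂ L :=
  (Submodule.equivMapOfInjective _ (mul_right_injective₀ hA) L).finrank_eq.symm

lemma finrank_linSys_le_of_mul {k : ℕ} {p : Fin k → Fin 3 → ℂ} {e : ℕ} {a : Fin k → ℕ}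
    {A : MvPolynomial (Fin 3) ℂ} (hA : A ∈ linSys p e a) (hA0 : A ≠ 0) (d : ℕ) (m : Fin k → ℕ) :
    Module.finrank ℂ (linSys p d m) ≤ Module.finrank ℂ (linSys p (e + d) (a + m)) := by
  rw [← finrank_map_mulLeft hA0]
  refine Submodule.finrank_mono ?_
  rintro _ ⟨F, hF, rfl⟩
  exact mul_mem_linSys hA hF

/-- The multiplicity vector `(m₀, m, …, m)` on six points. -/
def sixMult (m0 m : ℕ) : Fin 6 → ℕ := fun i => if i = 0 then m0 else m

lemma sixMult_add (a b c d : ℕ) : sixMult a b + sixMult c d = sixMult (a + c) (b + d) := by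
  ext i
  simp only [sixMult, Pi.add_apply]
  split_ifs <;> rfl

lemma smul_sixMult (n a b : ℕ) : n • sixMult a b = sixMult (n * a) (n * b) := by
  ext i
  simp only [sixMult, Pi.smul_apply, smul_eq_mul]
  split_ifs <;> rfl

lemma sixMult_le {d m0 m : ℕ} (h0 : m0 ≤ d) (h : m ≤ d) (i : Fin 6) : sixMult m0 m i ≤ d := by
  rw [sixMult]
  split_ifs <;> assumption

lemma sum_choose_sixMult (m0 m : ℕ) :
    ∑ i, (sixMult m0 m i + 1).choose 2 = (m0 + 1).choose 2 + 5 * (m + 1).choose 2 := by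
  simp [sixMult, Fin.sum_univ_succ]

lemma choose_le_finrank_linSys_sixMult (p : Fin 6 → Fin 3 → ℂ) (k : ℕ) {d m0 m : ℕ}
    (h0 : m0 ≤ d + 1) (h : m ≤ d + 1) :
    (d + 2).choose 2 ≤ Module.finrank ℂ (linSys p (2 * k + d) (sixMult m0 (k + m))) +
      ((m0 + 1).choose 2 + 5 * (m + 1).choose 2) := by
  have h1 := choose_le_finrank_linSys_add p (d := 2) (sixMult_le (m0 := 0) (m := 1) (by simp)
    (by simp))
  rw [sum_choose_sixMult] at h1
  have h2 : linSys p 2 (sixMult 0 1) ≠ ⊥ := by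
    intro hbot
    rw [hbot, finrank_bot] at h1
    simp [Nat.choose] at h1
  obtain ⟨Q, hQ, hQ0⟩ := Submodule.exists_mem_ne_zero_of_ne_bot h2
  have h3 := finrank_linSys_le_of_mul (pow_mem_linSys hQ k) (pow_ne_zero k hQ0) d (sixMult m0 m)
  rw [smul_sixMult, sixMult_add] at h3
  have h4 := choose_le_finrank_linSys_add p (sixMult_le h0 h)
  rw [sum_choose_sixMult] at h4
  rw [mul_zero, zero_add, mul_one] at h3
  omega

lemma finrank_linSys_add_choose_le {p : Fin 6 → Fin 3 → ℂ} {e r m : ℕ}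
    {A : MvPolynomial (Fin 3) ℂ} (hA : A ∈ linSys p e (sixMult 0 m)) (hA0 : aeval (p 0) A ≠ 0) :
    Module.finrank ℂ (linSys p (e + r) (sixMult (r + 1) m)) + (r + 2).choose 2 ≤
      Module.finrank ℂ (linSys p (e + r) (sixMult 0 m)) := by
  have hA1 : A ≠ 0 := by
    rintro rfl
    simp at hA0
  set U := (homogeneousSubmodule (Fin 3) ℂ r).map (LinearMap.mulLeft ℂ A)
  rw [← finrank_homogeneousSubmodule, ← finrank_map_mulLeft hA1 (homogeneousSubmodule _ _ r),
    ← Submodule.finrank_sup_add_finrank_inf_eq]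
  have hinf : linSys p (e + r) (sixMult (r + 1) m) ⊓ U = ⊥ := by
    rw [eq_bot_iff]
    rintro _ ⟨hF, G, hG, rfl⟩
    have h := (mem_linSys_iff.mp hF).2 0
    rw [LinearMap.mulLeft_apply, mult_mul, mult_eq_zero hA0, zero_add] at h
    have hG0 : G = 0 := eq_zero_of_totalDegree_lt_mult hG
      (lt_of_lt_of_le (by exact_mod_cast r.lt_succ_self) h)
    simp [hG0]
  rw [hinf, finrank_bot, add_zero]
  refine Submodule.finrank_mono (sup_le ?_ ?_)
  · intro F hF
    rw [mem_linSys_iff] at *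
    refine ⟨hF.1, fun i => le_trans ?_ (hF.2 i)⟩
    unfold sixMult
    split_ifs <;> simp
  · rintro _ ⟨G, hG, rfl⟩
    exact mul_mem_linSys (m := 0) hA (mem_linSys_iff.mpr ⟨hG, by simp⟩)

lemma Generically.and {k : ℕ} {Q R : (Fin k → Fin 3 → ℂ) → Prop} (hQ : Generically k Q)
    (hR : Generically k R) : Generically k fun p => Q p ∧ R p := by
  obtain ⟨P, hP, h⟩ := hQ
  obtain ⟨P', hP', h'⟩ := hR
  refine ⟨P * P', mul_ne_zero hP hP', fun p hp hPp => ?_⟩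
  rw [eval_mul] at hPp
  exact ⟨h p hp (left_ne_zero_of_mul hPp), h' p hp (right_ne_zero_of_mul hPp)⟩

lemma Generically.mono {k : ℕ} {Q R : (Fin k → Fin 3 → ℂ) → Prop} (hQ : Generically k Q)
    (h : ∀ p, Q p → R p) : Generically k R := by
  obtain ⟨P, hP, hPQ⟩ := hQ
  exact ⟨P, hP, fun p hp hPp => h p (hPQ p hp hPp)⟩

/-- Upper semicontinuity of the dimension of the kernel of a polynomial family of linear maps. -/
lemma generically_finrank_ker_le {k : ℕ} {V ι : Type*} [AddCommGroup V] [Module ℂ V]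
    [Module.Finite ℂ V] [Fintype ι] (Φ : (Fin k → Fin 3 → ℂ) → V →ₗ[ℂ] ι → ℂ)
    (hΦ : ∀ v j, ∃ P : MvPolynomial (Fin k × Fin 3) ℂ,
      ∀ p, eval (fun x => p x.1 x.2) P = Φ p v j)
    (q : Fin k → Fin 3 → ℂ) :
    Generically k fun p => Module.finrank ℂ (LinearMap.ker (Φ p)) ≤
      Module.finrank ℂ (LinearMap.ker (Φ q)) := by
  classical
  obtain ⟨U, hU⟩ := (LinearMap.ker (Φ q)).exists_isCompl
  obtain ⟨g, hg⟩ := ((Φ q).domRestrict U).exists_leftInverse_of_injective (by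
    rw [LinearMap.ker_domRestrict, ← Submodule.disjoint_iff_comap_eq_bot]
    exact hU.symm.disjoint)
  choose P hP using hΦ
  set b := Module.finBasis ℂ U
  set M : Matrix _ _ (MvPolynomial (Fin k × Fin 3) ℂ) := Matrix.of fun i l =>
    ∑ j, C (b.repr (g fun j' => if j = j' then 1 else 0) i) * P (b l) j with hM
  have hMp : ∀ p : Fin k → Fin 3 → ℂ, (eval fun x => p x.1 x.2) M.det =
      LinearMap.det (g ∘ₗ (Φ p).domRestrict U) := by
    intro p
    rw [RingHom.map_det, ← LinearMap.det_toMatrix b]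
    congr 1
    ext i l
    rw [LinearMap.toMatrix_apply, LinearMap.comp_apply, LinearMap.domRestrict_apply,
      LinearMap.pi_apply_eq_sum_univ g]
    simp [hM, hP, mul_comm]
  refine ⟨M.det, fun h0 => ?_, fun p _ hp => ?_⟩
  · have := hMp q
    rw [hg, h0, map_zero, LinearMap.det_id] at this
    exact zero_ne_one this
  · rw [hMp] at hp
    have hinj : Function.Injective ((Φ p).domRestrict U) := by
      have := ((g ∘ₗ (Φ p).domRestrict U).equivOfDetNeZero hp).injective
      exact Function.Injective.of_comp this
    have hdisj : LinearMap.ker (Φ p) ⊓ U = ⊥ := by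
      rw [eq_bot_iff]
      rintro v ⟨hv, hvU⟩
      have : (⟨v, hvU⟩ : U) = 0 := hinj (by simpa using hv)
      simpa using congrArg Subtype.val this
    have h1 := Submodule.finrank_sup_add_finrank_inf_eq (LinearMap.ker (Φ p)) U
    have h2 := Submodule.finrank_le (LinearMap.ker (Φ p) ⊔ U)
    have h3 := Submodule.finrank_add_eq_of_isCompl hU
    rw [hdisj, finrank_bot] at h1
    omega

lemma generically_finrank_linSys_le {k : ℕ} (q : Fin k → Fin 3 → ℂ) (d : ℕ) (m : Fin k → ℕ) :
    Generically k fun p => Module.finrank ℂ (linSys p d m) ≤ Module.finrank ℂ (linSys q d m) := by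
  let N := ∑ i, m i
  let Φ (p : Fin k → Fin 3 → ℂ) :
      homogeneousSubmodule (Fin 3) ℂ d →ₗ[ℂ] Fin k × (Fin 3 → Fin N) → ℂ :=
    LinearMap.pi fun j => if ∑ l, (j.2 l : ℕ) < m j.1 then
      (aeval (p j.1)).toLinearMap ∘ₗ mderiv (fun l => j.2 l) ∘ₗ Submodule.subtype _ else 0
  have hker : ∀ p, linSys p d m = (LinearMap.ker (Φ p)).map (Submodule.subtype _) := by
    intro p
    ext F
    simp only [linSys, Submodule.mem_inf, Submodule.mem_iInf, LinearMap.mem_ker, Submodule.mem_map]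
    constructor
    · rintro ⟨hF, h⟩
      refine ⟨⟨F, hF⟩, ?_, rfl⟩
      ext j
      by_cases hj : ∑ l, (j.2 l : ℕ) < m j.1
      · simpa [Φ, hj] using h j.1 (fun l => j.2 l) (by simpa [Fin.sum_univ_three] using hj)
      · simp [Φ, hj]
    · rintro ⟨F, hF, rfl⟩
      refine ⟨F.2, fun i ν hν => ?_⟩
      have hi : m i ≤ N := Finset.single_le_sum (f := m) (by simp) (Finset.mem_univ i)
      have hN : ∀ l, ν l < N := by
        intro l
        fin_cases l <;> simp <;> omega
      have := congrFun hF (i, fun l => ⟨ν l, hN l⟩)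
      simpa [Φ, Fin.sum_univ_three, hν] using this
  have hfin : ∀ p, Module.finrank ℂ (linSys p d m) = Module.finrank ℂ (LinearMap.ker (Φ p)) := by
    intro p
    rw [hker, Submodule.finrank_map_subtype_eq]
  simp only [hfin]
  refine generically_finrank_ker_le Φ (fun F j => ?_) q
  by_cases hj : ∑ l, (j.2 l : ℕ) < m j.1
  · refine ⟨rename (fun l => (j.1, l)) (mderiv (fun l => j.2 l) F), fun p => ?_⟩
    simp [Φ, hj, eval_rename, Function.comp_def, aeval_eq_eval]
  · exact ⟨0, by simp [Φ, hj]⟩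

/-- Five points on the conic `y² = xz`, preceded by the point `(0 : 1 : 0)` outside it. -/
noncomputable def conicConfig : Fin 6 → Fin 3 → ℂ :=
  Fin.cons ![0, 1, 0] fun i : Fin 5 => conicPt (i : ℕ)

lemma linSys_conicConfig (d m : ℕ) : linSys conicConfig d (sixMult 0 m) =
    linSys (fun i : Fin 5 => conicPt (i : ℕ)) d fun _ => m := by
  ext F
  rw [mem_linSys_iff, mem_linSys_iff, Fin.forall_fin_succ]
  simp [conicConfig, sixMult, Fin.succ_ne_zero]

lemma finrank_linSys_conicConfig_step (d m : ℕ) :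
    Module.finrank ℂ (linSys conicConfig (d + 2) (sixMult 0 (m + 1))) ≤
      (2 * (d + 2) + 1 - 5 * (m + 1)) +
        Module.finrank ℂ (linSys conicConfig d (sixMult 0 m)) := by
  rw [linSys_conicConfig, linSys_conicConfig]
  exact finrank_linSys_conicPt_le (fun i j h => Fin.ext (by exact_mod_cast h)) d m

lemma finrank_linSys_conicConfig_le {k : ℕ} (hk : k ≤ 2) :
    Module.finrank ℂ (linSys conicConfig (12 + k) (sixMult 0 6)) ≤ 5 * (k + 1).choose 2 + 1 := by
  have h0 : Module.finrank ℂ (linSys conicConfig k (sixMult 0 0)) ≤ (k + 2).choose 2 := by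
    rw [← finrank_homogeneousSubmodule]
    exact Submodule.finrank_mono inf_le_left
  have h1 := finrank_linSys_conicConfig_step k 0
  have h2 := finrank_linSys_conicConfig_step (k + 2) 1
  have h3 := finrank_linSys_conicConfig_step (k + 2 + 2) 2
  have h4 := finrank_linSys_conicConfig_step (k + 2 + 2 + 2) 3
  have h5 := finrank_linSys_conicConfig_step (k + 2 + 2 + 2 + 2) 4
  have h6 := finrank_linSys_conicConfig_step (k + 2 + 2 + 2 + 2 + 2) 5
  rw [add_comm 12 k]
  interval_cases k <;> simp [Nat.choose] at h0 h1 h2 h3 h4 h5 h6 ⊢ <;> omega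

lemma finrank_linSys_conicConfig_add_choose_le {k m0 : ℕ} (hk : k ≤ 2) (h0 : m0 ≤ k + 1) :
    Module.finrank ℂ (linSys conicConfig (12 + k) (sixMult m0 6)) + (m0 + 1).choose 2 ≤
      5 * (k + 1).choose 2 + 1 := by
  refine le_trans ?_ (finrank_linSys_conicConfig_le hk)
  cases m0 with
  | zero => simp
  | succ r =>
    have hA : conic ^ 6 * X 1 ^ (k - r) ∈ linSys conicConfig (12 + (k - r)) (sixMult 0 6) := by
      rw [linSys_conicConfig, mem_linSys_iff]
      refine ⟨(isHomogeneous_conic.pow 6).mul (isHomogeneous_X_pow 1 _), fun i => ?_⟩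
      rw [mult_mul, mult_pow, mult_conic]
      simp
    have h := finrank_linSys_add_choose_le (r := r) hA (by simp [conicConfig, conic])
    rwa [show 12 + (k - r) + r = 12 + k by omega] at h

lemma generically_projDim_eq {k m0 c : ℕ} (hk : k ≤ 2) (h0 : m0 ≤ k + 1)
    (hc : c + (m0 + 1).choose 2 = 5 * (k + 1).choose 2)
    (hv : max (-1) (virtDim (12 + k) (qh 5 m0)) < c) :
    Generically 6 fun p => projDim p (12 + k) (qh 5 m0) = c ∧
      projDim p (12 + k) (qh 5 m0) > max (-1) (virtDim (12 + k) (qh 5 m0)) := by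
  refine (generically_finrank_linSys_le conicConfig (12 + k) (sixMult m0 6)).mono fun p hp => ?_
  have hq := finrank_linSys_conicConfig_add_choose_le hk h0
  have hp' := choose_le_finrank_linSys_sixMult p (6 - 2 * k) (d := 5 * k) (m := 2 * k)
    (show m0 ≤ 5 * k + 1 by omega) (by omega)
  rw [show 2 * (6 - 2 * k) + 5 * k = 12 + k by omega,
    show 6 - 2 * k + 2 * k = 6 by omega] at hp'
  have hchoose : (5 * k + 2).choose 2 = 5 * (k + 1).choose 2 + 1 + 5 * (2 * k + 1).choose 2 := by
    interval_cases k <;> rfl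
  have h : projDim p (12 + k) (qh 5 m0) = c := by
    change (Module.finrank ℂ (linSys p (12 + k) (sixMult m0 6)) : ℤ) - 1 = c
    omega
  exact ⟨h, h ▸ hv⟩

theorem special_L_five_points :
    virtDim 13 (qh 5 2) = -4 ∧
    virtDim 14 (qh 5 3) = 8 ∧
    virtDim 12 (qh 5 0) = -15 ∧
    virtDim 13 (qh 5 1) = -2 ∧
    virtDim 14 (qh 5 2) = 11 ∧
    virtDim 13 (qh 5 0) = -1 ∧
    virtDim 14 (qh 5 1) = 13 ∧
    virtDim 14 (qh 5 0) = 14 ∧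
    Generically 6 (fun p =>
      (projDim p 13 (qh 5 2) = 2 ∧
        projDim p 13 (qh 5 2) > max (-1) (virtDim 13 (qh 5 2))) ∧
      (projDim p 14 (qh 5 3) = 9 ∧
        projDim p 14 (qh 5 3) > max (-1) (virtDim 14 (qh 5 3))) ∧
      (projDim p 12 (qh 5 0) = 0 ∧
        projDim p 12 (qh 5 0) > max (-1) (virtDim 12 (qh 5 0))) ∧
      (projDim p 13 (qh 5 1) = 4 ∧
        projDim p 13 (qh 5 1) > max (-1) (virtDim 13 (qh 5 1))) ∧
      (projDim p 14 (qh 5 2) = 12 ∧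
        projDim p 14 (qh 5 2) > max (-1) (virtDim 14 (qh 5 2))) ∧
      (projDim p 13 (qh 5 0) = 5 ∧
        projDim p 13 (qh 5 0) > max (-1) (virtDim 13 (qh 5 0))) ∧
      (projDim p 14 (qh 5 1) = 14 ∧
        projDim p 14 (qh 5 1) > max (-1) (virtDim 14 (qh 5 1))) ∧
      (projDim p 14 (qh 5 0) = 15 ∧
        projDim p 14 (qh 5 0) > max (-1) (virtDim 14 (qh 5 0)))) := by
  have v1 : virtDim 13 (qh 5 2) = -4 := by decide
  have v2 : virtDim 14 (qh 5 3) = 8 := by decide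
  have v3 : virtDim 12 (qh 5 0) = -15 := by decide
  have v4 : virtDim 13 (qh 5 1) = -2 := by decide
  have v5 : virtDim 14 (qh 5 2) = 11 := by decide
  have v6 : virtDim 13 (qh 5 0) = -1 := by decide
  have v7 : virtDim 14 (qh 5 1) = 13 := by decide
  have v8 : virtDim 14 (qh 5 0) = 14 := by decide
  refine ⟨v1, v2, v3, v4, v5, v6, v7, v8,
    .and ?_ <| .and ?_ <| .and ?_ <| .and ?_ <| .and ?_ <| .and ?_ <| .and ?_ ?_⟩
  · exact generically_projDim_eq (k := 1) (c := 2) (by simp) (by simp) rfl (by simp [v1])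
  · exact generically_projDim_eq (k := 2) (c := 9) (by simp) (by simp) rfl (by simp [v2])
  · exact generically_projDim_eq (k := 0) (c := 0) (by simp) (by simp) rfl (by simp [v3])
  · exact generically_projDim_eq (k := 1) (c := 4) (by simp) (by simp) rfl (by simp [v4])
  · exact generically_projDim_eq (k := 2) (c := 12) (by simp) (by simp) rfl (by simp [v5])
  · exact generically_projDim_eq (k := 1) (c := 5) (by simp) (by simp) rfl (by simp [v6])
  · exact generically_projDim_eq (k := 2) (c := 14) (by simp) (by simp) rfl (by simp [v7])
  · exact generically_projDim_eq (k := 2) (c := 15) (by simp) (by simp) rfl (by simp [v8])
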